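/- arXiv:2408.10223 — 14 statements merged into one kernel-verified Lean document; each statement's English description precedes it below -/
import Mathlib

section
/- Fix a grid step h > 0 and a reference point x ∈ ℝ. For all real numbers a, b, c there exists a unique polynomial q with real coefficients of degree at most 2 such that q(x − h) = a, the cell average of q over [x − h, x] equals b, and q(x) = c. -/
open intervalIntegral

open Polynomial in
lemma avg_aux (h : ℝ) (hh : 0 < h) (x u v w : ℝ) :
    (1 / h) * ∫ s in (x - h)..x, (C u + C v * X + C w * X ^ 2 : ℝ[X]).eval s
      = u + v * (x - h / 2) + w * (x ^ 2 - x * h + h ^ 2 / 3) := by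
  have h1 : ∫ s in (x - h)..x, (C u + C v * X + C w * X ^ 2 : ℝ[X]).eval s
      = (u * x + v * x ^ 2 / 2 + w * x ^ 3 / 3)
        - (u * (x - h) + v * (x - h) ^ 2 / 2 + w * (x - h) ^ 3 / 3) := by
    refine integral_eq_sub_of_hasDerivAt
      (f := fun s : ℝ => u * s + v * s ^ 2 / 2 + w * s ^ 3 / 3) ?_
      ((Polynomial.continuous _).intervalIntegrable _ _)
    intro s _
    have := (((hasDerivAt_id s).const_mul u).add
      ((((hasDerivAt_id s).pow 2).const_mul v).div_const 2)).add
      ((((hasDerivAt_id s).pow 3).const_mul w).div_const 3)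
    refine HasDerivAt.congr_deriv (f := fun s : ℝ => u * s + v * s ^ 2 / 2 + w * s ^ 3 / 3) this ?_
    simp
    ring
  rw [h1]
  field_simp
  ring

open Polynomial in
lemma quad_aux (q : ℝ[X]) (hq : q.natDegree ≤ 2) :
    ∃ u v w : ℝ, q = C u + C v * X + C w * X ^ 2 := by
  refine ⟨q.coeff 0, q.coeff 1, q.coeff 2, ?_⟩
  conv_lhs => rw [q.as_sum_range_C_mul_X_pow' (n := 3) (by omega)]
  simp [Finset.sum_range_succ]

/-- Unisolvence of the CFWENO3 (r = 2) big-stencil Hermite–Birkhoff interpolation: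
one cell average and the two endpoint values determine a unique quadratic. -/
theorem stmt_1 (h : ℝ) (hh : 0 < h) (x a b c : ℝ) :
    ∃! q : Polynomial ℝ, q.natDegree ≤ 2 ∧
      q.eval (x - h) = a ∧
      (1 / h) * ∫ s in (x - h)..x, q.eval s = b ∧
      q.eval x = c := by
  have hne : h ≠ 0 := hh.ne'
  obtain ⟨B, hB⟩ : ∃ B, B * h = 2 * a - 6 * b + 4 * c := ⟨_, div_mul_cancel₀ _ hne⟩
  obtain ⟨W, hW⟩ : ∃ W, W * h ^ 2 = 3 * a - 6 * b + 3 * c :=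
    ⟨_, div_mul_cancel₀ _ (pow_ne_zero 2 hne)⟩
  refine ⟨Polynomial.C (c - B * x + W * x ^ 2) + Polynomial.C (B - 2 * W * x) * Polynomial.X
    + Polynomial.C W * Polynomial.X ^ 2, ⟨?_, ?_, ?_, ?_⟩, ?_⟩
  · compute_degree
  · simp
    linear_combination hW - hB
  · rw [avg_aux h hh]
    linear_combination hW / 3 - hB / 2
  · simp
    ring
  · rintro q ⟨hd, h1, h2, h3⟩
    obtain ⟨u, v, w, rfl⟩ := quad_aux q hd
    rw [avg_aux h hh] at h2
    simp at h1 h3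
    have hw : w = W := by
      apply mul_right_cancel₀ (pow_ne_zero 2 hne)
      linear_combination 3 * h1 - 6 * h2 + 3 * h3 - hW
    subst hw
    have hv : v = B - 2 * w * x := by
      apply mul_right_cancel₀ hne
      linear_combination h3 - h1 + hW - hB
    subst hv
    have hu : u = c - B * x + w * x ^ 2 := by
      linear_combination h3
    rw [hu]
end

section
/- Fix a grid step h > 0 and a reference point x ∈ ℝ. For all real numbers A, a, B, c, C there exists a unique polynomial q with real coefficients of degree at most 4 such that the cell averages of q over [x − 2h, x − h], [x − h, x], [x, x + h] equal A, B, C respectively, and q(x − h) = a, q(x) = c. -/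
open intervalIntegral

lemma aux_int (h : ℝ) (hh : 0 < h) (x u v b0 b1 b2 b3 b4 : ℝ) (f : ℝ → ℝ)
    (hf : ∀ s, f s = b0 + b1 * ((s - x) / h) + b2 * ((s - x) / h) ^ 2
      + b3 * ((s - x) / h) ^ 3 + b4 * ((s - x) / h) ^ 4) (l r : ℝ)
    (hl : l = x + u * h) (hr : r = x + v * h) :
    (1 / h) * ∫ s in l..r, f s =
      (b0 * v + b1 * v ^ 2 / 2 + b2 * v ^ 3 / 3 + b3 * v ^ 4 / 4 + b4 * v ^ 5 / 5)
      - (b0 * u + b1 * u ^ 2 / 2 + b2 * u ^ 3 / 3 + b3 * u ^ 4 / 4 + b4 * u ^ 5 / 5) := by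
  have hne : h ≠ 0 := hh.ne'
  have key : ∫ s in l..r, f s = _ := integral_eq_sub_of_hasDerivAt
    (f := fun s => h * (b0 * ((s - x) / h) + b1 / 2 * ((s - x) / h) ^ 2
      + b2 / 3 * ((s - x) / h) ^ 3 + b3 / 4 * ((s - x) / h) ^ 4 + b4 / 5 * ((s - x) / h) ^ 5))
    (f' := f) (a := l) (b := r) (by
      intro s _
      have d : HasDerivAt (fun s : ℝ => (s - x) / h) (1 / h) s :=
        ((hasDerivAt_id s).sub_const x).div_const h
      have := ((((d.const_mul b0).add ((d.pow 2).const_mul (b1 / 2))).add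
        ((d.pow 3).const_mul (b2 / 3))).add ((d.pow 4).const_mul (b3 / 4))).add
        ((d.pow 5).const_mul (b4 / 5)) |>.const_mul h
      refine this.congr_deriv ?_
      rw [hf]
      push_cast
      field_simp)
    (by
      apply Continuous.intervalIntegrable
      rw [funext hf]
      fun_prop)
  rw [key]
  have e1 : (l - x) / h = u := by rw [hl]; field_simp; ring
  have e2 : (r - x) / h = v := by rw [hr]; field_simp; ring
  simp only [e1, e2]
  field_simp

lemma aux_sys (h : ℝ) (hh : 0 < h) (x A a B c C b0 b1 b2 b3 b4 : ℝ) (f : ℝ → ℝ)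
    (hf : ∀ s, f s = b0 + b1 * ((s - x) / h) + b2 * ((s - x) / h) ^ 2
      + b3 * ((s - x) / h) ^ 3 + b4 * ((s - x) / h) ^ 4) :
    ((1 / h) * ∫ s in (x - 2*h)..(x - h), f s = A ∧
      (1 / h) * ∫ s in (x - h)..x, f s = B ∧
      (1 / h) * ∫ s in x..(x + h), f s = C ∧
      f (x - h) = a ∧ f x = c) ↔
    (b0 = c ∧ b1 = C - B - b3 / 2 ∧ b2 = 3 / 2 * (C + B - 2 * c) - 3 / 5 * b4 ∧
      b3 = (A + 6 * c - 2 * C - 5 * B) / 3 - 4 * (a + 2 * c - C / 2 - 5 * B / 2) ∧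
      b4 = 5 / 12 * ((A + 6 * c - 2 * C - 5 * B) - 6 * (a + 2 * c - C / 2 - 5 * B / 2))) := by
  have hne : h ≠ 0 := hh.ne'
  rw [aux_int h hh x (-2) (-1) b0 b1 b2 b3 b4 f hf _ _ (by ring) (by ring),
    aux_int h hh x (-1) 0 b0 b1 b2 b3 b4 f hf _ _ (by ring) (by ring),
    aux_int h hh x 0 1 b0 b1 b2 b3 b4 f hf _ _ (by ring) (by ring), hf (x - h), hf x]
  have e1 : (x - h - x) / h = -1 := by field_simp; ring
  have e2 : (x - x) / h = 0 := by simp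
  rw [e1, e2]
  constructor
  · rintro ⟨h1, h2, h3, h4, h5⟩
    refine ⟨?_, ?_, ?_, ?_, ?_⟩ <;> linarith
  · rintro ⟨h1, h2, h3, h4, h5⟩
    refine ⟨?_, ?_, ?_, ?_, ?_⟩ <;> linarith

lemma aux_rep (h : ℝ) (hh : 0 < h) (x : ℝ) (q : Polynomial ℝ) (hq : q.natDegree ≤ 4) :
    ∃ b0 b1 b2 b3 b4 : ℝ, ∀ s, q.eval s = b0 + b1 * ((s - x) / h) + b2 * ((s - x) / h) ^ 2
      + b3 * ((s - x) / h) ^ 3 + b4 * ((s - x) / h) ^ 4 := by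
  have hne : h ≠ 0 := hh.ne'
  set p := q.comp (Polynomial.C h * Polynomial.X + Polynomial.C x) with hp
  have hd : p.natDegree < 5 := by
    have h1 := Polynomial.natDegree_comp_le (p := q)
      (q := Polynomial.C h * Polynomial.X + Polynomial.C x)
    have h2 := Polynomial.natDegree_linear_le (a := h) (b := x)
    have := Nat.mul_le_mul hq h2
    rw [hp]
    omega
  refine ⟨p.coeff 0, p.coeff 1, p.coeff 2, p.coeff 3, p.coeff 4, fun s => ?_⟩
  have e : q.eval s = p.eval ((s - x) / h) := by
    rw [hp, Polynomial.eval_comp]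
    congr 1
    simp
    field_simp
    ring
  rw [e, Polynomial.eval_eq_sum_range' hd]
  simp [Finset.sum_range_succ]

/-- Unisolvence of the CFWENO5 (r = 3) big-stencil Hermite–Birkhoff interpolation:
three consecutive cell averages and the two endpoint values of the middle cell
determine a unique quartic. -/
theorem stmt_2 (h : ℝ) (hh : 0 < h) (x A a B c C : ℝ) :
    ∃! q : Polynomial ℝ, q.natDegree ≤ 4 ∧
      (1 / h) * ∫ s in (x - 2*h)..(x - h), q.eval s = A ∧
      (1 / h) * ∫ s in (x - h)..x, q.eval s = B ∧
      (1 / h) * ∫ s in x..(x + h), q.eval s = C ∧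
      q.eval (x - h) = a ∧
      q.eval x = c := by
  apply existsUnique_of_exists_of_unique
  · obtain ⟨b4, h4⟩ : ∃ b4 : ℝ, b4 = 5 / 12 * ((A + 6 * c - 2 * C - 5 * B)
      - 6 * (a + 2 * c - C / 2 - 5 * B / 2)) := ⟨_, rfl⟩
    obtain ⟨b3, h3⟩ : ∃ b3 : ℝ, b3 = (A + 6 * c - 2 * C - 5 * B) / 3
      - 4 * (a + 2 * c - C / 2 - 5 * B / 2) := ⟨_, rfl⟩
    obtain ⟨b2, h2⟩ : ∃ b2 : ℝ, b2 = 3 / 2 * (C + B - 2 * c) - 3 / 5 * b4 := ⟨_, rfl⟩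
    obtain ⟨b1, h1⟩ : ∃ b1 : ℝ, b1 = C - B - b3 / 2 := ⟨_, rfl⟩
    let p : Polynomial ℝ := Polynomial.C c + Polynomial.C b1 * Polynomial.X
      + Polynomial.C b2 * Polynomial.X ^ 2 + Polynomial.C b3 * Polynomial.X ^ 3
      + Polynomial.C b4 * Polynomial.X ^ 4
    have hp : p.natDegree ≤ 4 := by
      simp only [p]
      compute_degree
    refine ⟨p.comp (Polynomial.C (1 / h) * Polynomial.X + Polynomial.C (-x / h)), ?_, ?_⟩
    · have e1 := Polynomial.natDegree_comp_le (p := p)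
        (q := Polynomial.C (1 / h) * Polynomial.X + Polynomial.C (-x / h))
      have e2 := Polynomial.natDegree_linear_le (a := 1 / h) (b := -x / h)
      have := Nat.mul_le_mul hp e2
      omega
    · refine (aux_sys h hh x A a B c C c b1 b2 b3 b4 _ ?_).2 ⟨rfl, h1, h2, h3, h4⟩
      intro s
      have e : (s - x) / h = 1 / h * s + -x / h := by ring
      rw [e]
      simp [p]
  · rintro q1 q2 ⟨d1, k1⟩ ⟨d2, k2⟩
    obtain ⟨b0, b1, b2, b3, b4, hb⟩ := aux_rep h hh x q1 d1
    obtain ⟨g0, g1, g2, g3, g4, hg⟩ := aux_rep h hh x q2 d2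
    obtain ⟨r0, r1, r2, r3, r4⟩ := (aux_sys h hh x A a B c C b0 b1 b2 b3 b4 _ hb).1 k1
    obtain ⟨t0, t1, t2, t3, t4⟩ := (aux_sys h hh x A a B c C g0 g1 g2 g3 g4 _ hg).1 k2
    apply Polynomial.funext
    intro s
    rw [hb, hg, r0, r1, r2, t0, t1, t2, r3, r4, t3, t4]
end

section
/- Fix a grid step h > 0 and a reference point x ∈ ℝ. For all real numbers A, B, C and a₀, a₁, a₂, a₃ there exists a unique polynomial q with real coefficients of degree at most 6 such that the cell averages of q over [x − 2h, x − h], [x − h, x], [x, x + h] equal A, B, C respectively, and q(x − 2h) = a₀, q(x − h) = a₁, q(x) = a₂, q(x + h) = a₃. -/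
open intervalIntegral

/-- The degree-six polynomial function in the scaled variable. -/
noncomputable def sixPoly (c : Fin 7 → ℝ) (t : ℝ) : ℝ :=
  c 0 + c 1 * t + c 2 * t^2 + c 3 * t^3 + c 4 * t^4 + c 5 * t^5 + c 6 * t^6

/-- A primitive of `sixPoly`. -/
noncomputable def sixPrim (c : Fin 7 → ℝ) (t : ℝ) : ℝ :=
  c 0 * t + c 1 * t^2 / 2 + c 2 * t^3 / 3 + c 3 * t^4 / 4 + c 4 * t^5 / 5 + c 5 * t^6 / 6
    + c 6 * t^7 / 7

lemma sixPrim_hasDerivAt (c : Fin 7 → ℝ) (t : ℝ) : HasDerivAt (sixPrim c) (sixPoly c t) t := by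
  unfold sixPrim sixPoly
  have p := fun n : ℕ => hasDerivAt_pow n t
  have := (((((((hasDerivAt_id t).const_mul (c 0)).add (((p 2).const_mul (c 1)).div_const 2)).add
    (((p 3).const_mul (c 2)).div_const 3)).add (((p 4).const_mul (c 3)).div_const 4)).add
    (((p 5).const_mul (c 4)).div_const 5)).add (((p 6).const_mul (c 5)).div_const 6)).add
    (((p 7).const_mul (c 6)).div_const 7)
  refine this.congr_deriv ?_
  norm_num
  ring

lemma sixPoly_integral (c : Fin 7 → ℝ) (h : ℝ) (hh : 0 < h) (x u v : ℝ) :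
    (1 / h) * ∫ s in u..v, sixPoly c ((s - x) / h)
      = sixPrim c ((v - x) / h) - sixPrim c ((u - x) / h) := by
  have hd : ∀ s : ℝ, HasDerivAt (fun s => h * sixPrim c ((s - x) / h))
      (sixPoly c ((s - x) / h)) s := by
    intro s
    have h1 : HasDerivAt (fun s : ℝ => (s - x) / h) (1 / h) s :=
      ((hasDerivAt_id s).sub_const x).div_const h
    have h2 := ((sixPrim_hasDerivAt c ((s - x) / h)).comp s h1).const_mul h
    refine h2.congr_deriv ?_
    field_simp
  rw [integral_eq_sub_of_hasDerivAt (fun s _ => hd s)]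
  · field_simp
  · apply Continuous.intervalIntegrable
    unfold sixPoly
    fun_prop

lemma sixPoly_repr (q : Polynomial ℝ) (hq : q.natDegree ≤ 6) (h : ℝ) (hh : 0 < h) (x : ℝ) :
    ∃ c : Fin 7 → ℝ, ∀ s, q.eval s = sixPoly c ((s - x) / h) := by
  set p := q.comp (Polynomial.C h * Polynomial.X + Polynomial.C x) with hp
  have hdeg : p.natDegree < 7 := by
    have h1 : p.natDegree ≤ q.natDegree * 1 :=
      Polynomial.natDegree_comp_le.trans (Nat.mul_le_mul_left _ Polynomial.natDegree_linear_le)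
    omega
  refine ⟨fun i => p.coeff i, fun s => ?_⟩
  have h2 : q.eval s = p.eval ((s - x) / h) := by
    rw [hp, Polynomial.eval_comp]
    congr 1
    simp
    field_simp
    ring
  rw [h2, Polynomial.eval_eq_sum_range' hdeg]
  simp [Finset.sum_range_succ, sixPoly]

lemma sixPoly_conds (q : Polynomial ℝ) (c : Fin 7 → ℝ) (h : ℝ) (hh : 0 < h)
    (x A B C a₀ a₁ a₂ a₃ : ℝ) (hc : ∀ s, q.eval s = sixPoly c ((s - x) / h)) :
    ((1 / h) * ∫ s in (x - 2*h)..(x - h), q.eval s = A ∧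
      (1 / h) * ∫ s in (x - h)..x, q.eval s = B ∧
      (1 / h) * ∫ s in x..(x + h), q.eval s = C ∧
      q.eval (x - 2*h) = a₀ ∧
      q.eval (x - h) = a₁ ∧
      q.eval x = a₂ ∧
      q.eval (x + h) = a₃) ↔
    (sixPrim c (-1) - sixPrim c (-2) = A ∧ sixPrim c 0 - sixPrim c (-1) = B ∧
      sixPrim c 1 - sixPrim c 0 = C ∧ sixPoly c (-2) = a₀ ∧ sixPoly c (-1) = a₁ ∧
      sixPoly c 0 = a₂ ∧ sixPoly c 1 = a₃) := by
  have e1 : (x - 2*h - x) / h = -2 := by field_simp; ring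
  have e2 : (x - h - x) / h = -1 := by field_simp; ring
  have e3 : (x - x) / h = 0 := by simp
  have e4 : (x + h - x) / h = 1 := by field_simp; ring
  simp only [hc, sixPoly_integral c h hh x, e1, e2, e3, e4]

lemma sixPoly_solve (c : Fin 7 → ℝ) (A B C a₀ a₁ a₂ a₃ : ℝ) :
    (sixPrim c (-1) - sixPrim c (-2) = A ∧ sixPrim c 0 - sixPrim c (-1) = B ∧
      sixPrim c 1 - sixPrim c 0 = C ∧ sixPoly c (-2) = a₀ ∧ sixPoly c (-1) = a₁ ∧
      sixPoly c 0 = a₂ ∧ sixPoly c 1 = a₃) ↔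
    c = ![(1)*a₂,
      (-25/54)*A + (-241/54)*B + (28/27)*C + (1/9)*a₀ + (2)*a₁ + (2)*a₂ + (-2/9)*a₃,
      (-11/36)*A + (97/36)*B + (31/9)*C + (1/12)*a₀ + (-21/4)*a₂ + (-2/3)*a₃,
      (50/27)*A + (320/27)*B + (50/27)*C + (-4/9)*a₀ + (-7)*a₁ + (-8)*a₂ + (-1/9)*a₃,
      (55/54)*A + (-25/108)*B + (-295/108)*C + (-5/18)*a₀ + (-5/4)*a₁ + (5/2)*a₂ + (35/36)*a₃,
      (-25/18)*A + (-133/18)*B + (-26/9)*C + (1/3)*a₀ + (9/2)*a₁ + (6)*a₂ + (5/6)*a₃,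
      (-77/108)*A + (-133/54)*B + (-77/108)*C + (7/36)*a₀ + (7/4)*a₁ + (7/4)*a₂ + (7/36)*a₃] := by
  unfold sixPrim sixPoly
  constructor
  · rintro ⟨h1, h2, h3, h4, h5, h6, h7⟩
    ext i
    fin_cases i <;> simp <;> linarith
  · rintro rfl
    simp
    refine ⟨?_, ?_, ?_, ?_, ?_, ?_⟩ <;> ring

/-- Unisolvence of the CFWENO7 (r = 4) big-stencil Hermite–Birkhoff interpolation:
three consecutive cell averages and four interface point values determine a
unique degree-6 polynomial. -/
theorem stmt_3 (h : ℝ) (hh : 0 < h) (x A B C a₀ a₁ a₂ a₃ : ℝ) :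
    ∃! q : Polynomial ℝ, q.natDegree ≤ 6 ∧
      (1 / h) * ∫ s in (x - 2*h)..(x - h), q.eval s = A ∧
      (1 / h) * ∫ s in (x - h)..x, q.eval s = B ∧
      (1 / h) * ∫ s in x..(x + h), q.eval s = C ∧
      q.eval (x - 2*h) = a₀ ∧
      q.eval (x - h) = a₁ ∧
      q.eval x = a₂ ∧
      q.eval (x + h) = a₃ := by
  obtain ⟨c, hc⟩ : ∃ c : Fin 7 → ℝ, sixPrim c (-1) - sixPrim c (-2) = A ∧
      sixPrim c 0 - sixPrim c (-1) = B ∧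
      sixPrim c 1 - sixPrim c 0 = C ∧ sixPoly c (-2) = a₀ ∧ sixPoly c (-1) = a₁ ∧
      sixPoly c 0 = a₂ ∧ sixPoly c 1 = a₃ := ⟨_, (sixPoly_solve _ A B C a₀ a₁ a₂ a₃).2 rfl⟩
  let p : Polynomial ℝ := Polynomial.C (c 0) + Polynomial.C (c 1) * Polynomial.X
    + Polynomial.C (c 2) * Polynomial.X^2 + Polynomial.C (c 3) * Polynomial.X^3
    + Polynomial.C (c 4) * Polynomial.X^4 + Polynomial.C (c 5) * Polynomial.X^5
    + Polynomial.C (c 6) * Polynomial.X^6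
  have hpd : p.natDegree ≤ 6 := by
    simp only [p]
    compute_degree
  let q := p.comp (Polynomial.C (1 / h) * Polynomial.X + Polynomial.C (-x / h))
  have hqd : q.natDegree ≤ 6 := by
    have h1 : q.natDegree ≤ p.natDegree * 1 :=
      Polynomial.natDegree_comp_le.trans (Nat.mul_le_mul_left _ Polynomial.natDegree_linear_le)
    omega
  have hq : ∀ s, q.eval s = sixPoly c ((s - x) / h) := by
    intro s
    have e : 1 / h * s + -x / h = (s - x) / h := by ring
    simp only [q, p, Polynomial.eval_comp, Polynomial.eval_add, Polynomial.eval_mul,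
      Polynomial.eval_C, Polynomial.eval_X, Polynomial.eval_pow, e, sixPoly]
  refine ⟨q, ⟨hqd, (sixPoly_conds q c h hh x A B C a₀ a₁ a₂ a₃ hq).2 hc⟩, ?_⟩
  rintro r ⟨hrd, hr⟩
  obtain ⟨d, hd⟩ := sixPoly_repr r hrd h hh x
  have h1 := (sixPoly_solve _ _ _ _ _ _ _ _).1 ((sixPoly_conds r d h hh x _ _ _ _ _ _ _ hd).1 hr)
  have h2 := (sixPoly_solve _ _ _ _ _ _ _ _).1 hc
  apply Polynomial.funext
  intro s
  rw [hd, hq, h1, h2]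
end

section
/- Fix a grid step h > 0, a reference point x ∈ ℝ, and real numbers a, b. Let p be the unique polynomial of degree at most 1 with p(x − h) = a and cell average b over [x − h, x]. Then for every real ν ≠ 0, the average (1/(νh))·∫_{x−νh}^{x} p(s) ds equals b + (1 − ν)·(b − a). -/
open intervalIntegral

/-- CFWENO3 sub-stencil initial value reconstruction ū₀² (formula A1). -/
theorem stmt_4 (h : ℝ) (hh : 0 < h) (x a b : ℝ)
    (p : Polynomial ℝ) (hdeg : p.natDegree ≤ 1)
    (hpa : p.eval (x - h) = a)
    (hpb : (1 / h) * ∫ s in (x - h)..x, p.eval s = b) :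
    ∀ ν : ℝ, ν ≠ 0 →
      (1 / (ν * h)) * ∫ s in (x - ν * h)..x, p.eval s
        = b + (1 - ν) * (b - a) := by
  intro ν hν
  obtain ⟨d, c, rfl⟩ := Polynomial.exists_eq_X_add_C_of_natDegree_le_one hdeg
  have key : ∀ u v : ℝ, ∫ s in u..v, (Polynomial.C d * Polynomial.X + Polynomial.C c).eval s
      = d * ((v ^ 2 - u ^ 2) / 2) + c * (v - u) := by
    intro u v
    simp only [Polynomial.eval_add, Polynomial.eval_mul, Polynomial.eval_C, Polynomial.eval_X]
    rw [intervalIntegral.integral_add (Continuous.intervalIntegrable (by fun_prop) _ _)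
      (Continuous.intervalIntegrable (by fun_prop) _ _), intervalIntegral.integral_const_mul,
      integral_id, intervalIntegral.integral_const, smul_eq_mul]
    ring
  rw [key] at hpb ⊢
  simp only [Polynomial.eval_add, Polynomial.eval_mul, Polynomial.eval_C, Polynomial.eval_X] at hpa
  subst hpa hpb
  have := hh.ne'
  field_simp
  ring
end

section
/- Fix a grid step h > 0, a reference point x ∈ ℝ, and real numbers a, b, c. Let q be the unique polynomial of degree at most 2 with q(x − h) = a, cell average b over [x − h, x], and q(x) = c. Then for every real ν ≠ 0, the average (1/(νh))·∫_{x−νh}^{x} q(s) ds equals b + (1 − ν)·(c − b) − ν·(1 − ν)·(a − 2b + c). -/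
open intervalIntegral

/-- Integral of a quadratic, in coefficient form. -/
theorem quad_integral_aux (A B C u v : ℝ) :
    ∫ s in u..v, (A + B * s + C * s ^ 2)
      = A * (v - u) + B * ((v ^ 2 - u ^ 2) / 2) + C * ((v ^ 3 - u ^ 3) / 3) := by
  have hd : ∀ s ∈ Set.uIcc u v, HasDerivAt
      (fun s : ℝ => A * s + B * (s ^ 2 / 2) + C * (s ^ 3 / 3)) (A + B * s + C * s ^ 2) s := by
    intro s _
    have h1 := (hasDerivAt_id s).const_mul A
    have h2 := ((hasDerivAt_pow 2 s).div_const 2).const_mul B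
    have h3 := ((hasDerivAt_pow 3 s).div_const 3).const_mul C
    refine ((h1.add h2).add h3).congr_deriv ?_
    norm_num
  rw [integral_eq_sub_of_hasDerivAt hd
    (Continuous.intervalIntegrable (by fun_prop) _ _)]
  ring

/-- CFWENO3 big-stencil initial value reconstruction ū² (formula A1). -/
theorem stmt_5 (h : ℝ) (hh : 0 < h) (x a b c : ℝ)
    (q : Polynomial ℝ) (hdeg : q.natDegree ≤ 2)
    (hqa : q.eval (x - h) = a)
    (hqb : (1 / h) * ∫ s in (x - h)..x, q.eval s = b)
    (hqc : q.eval x = c) :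
    ∀ ν : ℝ, ν ≠ 0 →
      (1 / (ν * h)) * ∫ s in (x - ν * h)..x, q.eval s
        = b + (1 - ν) * (c - b) - ν * (1 - ν) * (a - 2*b + c) := by
  intro ν hν
  have hq : ∀ s : ℝ, q.eval s = q.coeff 0 + q.coeff 1 * s + q.coeff 2 * s ^ 2 := by
    intro s
    rw [Polynomial.eval_eq_sum_range' (n := 3) (by omega)]
    simp [Finset.sum_range_succ]
  have hh' : h ≠ 0 := hh.ne'
  simp only [hq, quad_integral_aux] at *
  subst hqa hqb hqc
  field_simp
  ring
end

section
/- Fix a grid step h > 0, a reference point x ∈ ℝ, and real numbers A, a, B. Let p be the unique polynomial of degree at most 2 whose cell averages over [x − 2h, x − h] and [x − h, x] equal A and B respectively and which satisfies p(x − h) = a (this interpolation problem has exactly one solution). Then for every real ν ≠ 0, the average (1/(νh))·∫_{x−νh}^{x} p(s) ds equals B + (1 − ν)·(B − a) + ((1 − ν)²/2)·(A − 2a + B). -/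
open intervalIntegral

/-- Leftmost CFWENO5 sub-stencil initial value reconstruction ū₀³ (formula A2). -/
theorem stmt_6 (h : ℝ) (hh : 0 < h) (x A a B : ℝ)
    (p : Polynomial ℝ) (hdeg : p.natDegree ≤ 2)
    (hpA : (1 / h) * ∫ s in (x - 2*h)..(x - h), p.eval s = A)
    (hpB : (1 / h) * ∫ s in (x - h)..x, p.eval s = B)
    (hpa : p.eval (x - h) = a) :
    ∀ ν : ℝ, ν ≠ 0 →
      (1 / (ν * h)) * ∫ s in (x - ν * h)..x, p.eval s
        = B + (1 - ν) * (B - a) + ((1 - ν)^2 / 2) * (A - 2*a + B) := by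
  intro ν hν
  obtain ⟨c0, c1, c2, hp⟩ : ∃ c0 c1 c2 : ℝ, ∀ s, p.eval s = c0 + c1 * s + c2 * s ^ 2 := by
    refine ⟨p.coeff 0, p.coeff 1, p.coeff 2, fun s => ?_⟩
    rw [Polynomial.eval_eq_sum_range' (n := 3) (by omega)]
    simp [Finset.sum_range_succ]
  have hI : ∀ u v : ℝ, ∫ s in u..v, p.eval s
      = (c0 * v + c1 * v ^ 2 / 2 + c2 * v ^ 3 / 3)
        - (c0 * u + c1 * u ^ 2 / 2 + c2 * u ^ 3 / 3) := by
    intro u v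
    refine integral_eq_sub_of_hasDerivAt
      (f := fun t : ℝ => c0 * t + c1 * t ^ 2 / 2 + c2 * t ^ 3 / 3) (fun t _ => ?_)
      (p.continuous.intervalIntegrable u v)
    have h1 := (((hasDerivAt_id t).const_mul c0).add
      ((((hasDerivAt_id t).pow 2).const_mul c1).div_const 2)).add
      ((((hasDerivAt_id t).pow 3).const_mul c2).div_const 3)
    refine h1.congr_deriv ?_
    rw [hp]
    simp
    ring
  have hh0 : h ≠ 0 := hh.ne'
  rw [hI] at hpA hpB ⊢
  rw [hp] at hpa
  subst hpA hpB hpa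
  field_simp
  ring
end

section
/- Fix a grid step h > 0, a reference point x ∈ ℝ, and real numbers A, a, B, c, C. Let q be the unique polynomial of degree at most 4 whose cell averages over [x − 2h, x − h], [x − h, x], [x, x + h] equal A, B, C and which satisfies q(x − h) = a and q(x) = c. Then for every real ν ≠ 0, the average (1/(νh))·∫_{x−νh}^{x} q(s) ds equals B + (1 − ν)(c − B) − (ν(1 − ν)/2)(B − 2c + C) − (ν(1 − ν)(1 + ν)/4)(2a − 5B + 4c − C) − (ν(1 − ν)²(1 + ν)/12)(−A + 6a − 10B + 6c − C). -/
open intervalIntegral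

lemma eval_taylor_form (q : Polynomial ℝ) (hdeg : q.natDegree ≤ 4) (x : ℝ) :
    ∃ b0 b1 b2 b3 b4 : ℝ, ∀ s, q.eval s =
      b0 + b1 * (s - x) + b2 * (s - x)^2 + b3 * (s - x)^3 + b4 * (s - x)^4 := by
  refine ⟨(q.taylor x).coeff 0, (q.taylor x).coeff 1, (q.taylor x).coeff 2,
    (q.taylor x).coeff 3, (q.taylor x).coeff 4, fun s => ?_⟩
  have h1 : q.eval s = (q.taylor x).eval (s - x) := by
    rw [Polynomial.taylor_eval]; congr 1; ring
  have h2 : (q.taylor x).natDegree < 5 := by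
    rw [Polynomial.natDegree_taylor]; omega
  rw [h1, Polynomial.eval_eq_sum_range' h2]
  simp [Finset.sum_range_succ]

lemma integral_taylor_form (b0 b1 b2 b3 b4 x u v : ℝ) :
    ∫ s in u..v, (b0 + b1 * (s - x) + b2 * (s - x)^2 + b3 * (s - x)^3 + b4 * (s - x)^4) =
      (b0 * (v - x) + b1 * (v - x)^2 / 2 + b2 * (v - x)^3 / 3 + b3 * (v - x)^4 / 4
        + b4 * (v - x)^5 / 5)
      - (b0 * (u - x) + b1 * (u - x)^2 / 2 + b2 * (u - x)^3 / 3 + b3 * (u - x)^4 / 4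
        + b4 * (u - x)^5 / 5) := by
  refine intervalIntegral.integral_eq_sub_of_hasDerivAt (f := fun s => b0 * (s - x)
    + b1 * (s - x)^2 / 2 + b2 * (s - x)^3 / 3 + b3 * (s - x)^4 / 4 + b4 * (s - x)^5 / 5) ?_ ?_
  · intro s _
    have hd : HasDerivAt (fun s : ℝ => s - x) 1 s := (hasDerivAt_id s).sub_const x
    have := ((((hd.const_mul b0).add (((hd.pow 2).const_mul b1).div_const 2)).add
      (((hd.pow 3).const_mul b2).div_const 3)).add
      (((hd.pow 4).const_mul b3).div_const 4)).add (((hd.pow 5).const_mul b4).div_const 5)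
    refine this.congr_deriv ?_
    norm_num
    ring
  · exact Continuous.intervalIntegrable (by fun_prop) _ _

/-- CFWENO5 big-stencil initial value reconstruction ū⁵ (formula A2). -/
theorem stmt_7 (h : ℝ) (hh : 0 < h) (x A a B c C : ℝ)
    (q : Polynomial ℝ) (hdeg : q.natDegree ≤ 4)
    (hqA : (1 / h) * ∫ s in (x - 2*h)..(x - h), q.eval s = A)
    (hqB : (1 / h) * ∫ s in (x - h)..x, q.eval s = B)
    (hqC : (1 / h) * ∫ s in x..(x + h), q.eval s = C)
    (hqa : q.eval (x - h) = a)
    (hqc : q.eval x = c) :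
    ∀ ν : ℝ, ν ≠ 0 →
      (1 / (ν * h)) * ∫ s in (x - ν * h)..x, q.eval s
        = B + (1 - ν) * (c - B)
          - (ν * (1 - ν) / 2) * (B - 2*c + C)
          - (ν * (1 - ν) * (1 + ν) / 4) * (2*a - 5*B + 4*c - C)
          - (ν * (1 - ν)^2 * (1 + ν) / 12) * (-A + 6*a - 10*B + 6*c - C) := by
  intro ν hν
  obtain ⟨b0, b1, b2, b3, b4, hb⟩ := eval_taylor_form q hdeg x
  simp only [hb, integral_taylor_form] at *
  have hh' : h ≠ 0 := hh.ne'
  subst hqA hqB hqC hqa hqc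
  field_simp
  ring
end

section
/- Fix a grid step h > 0, a reference point x ∈ ℝ, real numbers a, b, c, and a real ν ≠ 0. Let p₀ be the unique polynomial of degree ≤ 1 with p₀(x − h) = a and cell average b over [x − h, x]; let p₁ be the unique polynomial of degree ≤ 1 with cell average b over [x − h, x] and p₁(x) = c; and let q be the unique polynomial of degree ≤ 2 with q(x − h) = a, cell average b over [x − h, x], and q(x) = c. Then (1/(νh))·∫_{x−νh}^{x} q = ν·(1/(νh))·∫_{x−νh}^{x} p₀ + (1 − ν)·(1/(νh))·∫_{x−νh}^{x} p₁. -/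
open intervalIntegral

/-- Mean values of a polynomial of degree at most two, in centred coordinates. -/
lemma quad_form (p : Polynomial ℝ) (hp : p.natDegree ≤ 2) (x : ℝ) :
    ∃ A B : ℝ, (∀ t : ℝ, p.eval (x - t) = A - B * t + p.coeff 2 * t ^ 2) ∧
      ∀ t : ℝ, ∫ s in (x - t)..x, p.eval s
        = A * t - B * t ^ 2 / 2 + p.coeff 2 * t ^ 3 / 3 := by
  have hev : ∀ s : ℝ, p.eval s = p.coeff 0 + p.coeff 1 * s + p.coeff 2 * s ^ 2 := by
    intro s
    rw [Polynomial.eval_eq_sum_range' (Nat.lt_succ_of_le hp)]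
    simp [Finset.sum_range_succ]
  refine ⟨p.coeff 0 + p.coeff 1 * x + p.coeff 2 * x ^ 2,
    p.coeff 1 + 2 * p.coeff 2 * x, fun t => by rw [hev]; ring, fun t => ?_⟩
  have hd : ∀ s ∈ Set.uIcc (x - t) x, HasDerivAt
      (fun s : ℝ => p.coeff 0 * s + p.coeff 1 * (s ^ 2 / 2) + p.coeff 2 * (s ^ 3 / 3))
      (p.eval s) s := by
    intro s _
    have h1 := (hasDerivAt_id s).const_mul (p.coeff 0)
    have h2 := ((hasDerivAt_pow 2 s).div_const 2).const_mul (p.coeff 1)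
    have h3 := ((hasDerivAt_pow 3 s).div_const 3).const_mul (p.coeff 2)
    refine ((h1.add h2).add h3).congr_deriv ?_
    rw [hev]
    push_cast
    ring
  rw [integral_eq_sub_of_hasDerivAt hd (p.continuous.intervalIntegrable _ _)]
  ring

/-- Optimal linear weight identity of Table 1 for r = 2: the big-stencil average
reconstruction equals the combination of sub-stencil average reconstructions with
weights γ̄₀ = ν and γ̄₁ = 1 − ν. -/
theorem stmt_8 (h : ℝ) (hh : 0 < h) (x a b c ν : ℝ) (hν : ν ≠ 0)
    (p₀ : Polynomial ℝ) (hdeg₀ : p₀.natDegree ≤ 1)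
    (hp₀a : p₀.eval (x - h) = a)
    (hp₀b : (1 / h) * ∫ s in (x - h)..x, p₀.eval s = b)
    (p₁ : Polynomial ℝ) (hdeg₁ : p₁.natDegree ≤ 1)
    (hp₁b : (1 / h) * ∫ s in (x - h)..x, p₁.eval s = b)
    (hp₁c : p₁.eval x = c)
    (q : Polynomial ℝ) (hdegq : q.natDegree ≤ 2)
    (hqa : q.eval (x - h) = a)
    (hqb : (1 / h) * ∫ s in (x - h)..x, q.eval s = b)
    (hqc : q.eval x = c) :
    (1 / (ν * h)) * ∫ s in (x - ν * h)..x, q.eval s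
      = ν * ((1 / (ν * h)) * ∫ s in (x - ν * h)..x, p₀.eval s)
        + (1 - ν) * ((1 / (ν * h)) * ∫ s in (x - ν * h)..x, p₁.eval s) := by
  have hh' : h ≠ 0 := hh.ne'
  obtain ⟨A, B, hq, hqi⟩ := quad_form q hdegq x
  obtain ⟨A₀, B₀, h0, h0i⟩ := quad_form p₀ (by omega) x
  obtain ⟨A₁, B₁, h1, h1i⟩ := quad_form p₁ (by omega) x
  have c0 : p₀.coeff 2 = 0 := Polynomial.coeff_eq_zero_of_natDegree_lt (by omega)
  have c1 : p₁.coeff 2 = 0 := Polynomial.coeff_eq_zero_of_natDegree_lt (by omega)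
  have hqx := hq 0
  have h1x := h1 0
  simp only [sub_zero, hqc, hp₁c] at hqx h1x
  have mean : ∀ A B C t : ℝ, t ≠ 0 →
      (1 / t) * (A * t - B * t ^ 2 / 2 + C * t ^ 3 / 3) = A - B * t / 2 + C * t ^ 2 / 3 := by
    intro A B C t ht
    field_simp
  rw [hqi, mean _ _ _ _ hh'] at hqb
  rw [h0i, mean _ _ _ _ hh', c0] at hp₀b
  rw [h1i, mean _ _ _ _ hh', c1] at hp₁b
  rw [hq] at hqa
  rw [h0, c0] at hp₀a
  have hνh := mul_ne_zero hν hh'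
  rw [hqi, h0i, h1i, mean _ _ _ _ hνh, mean _ _ _ _ hνh, mean _ _ _ _ hνh, c0, c1]
  have eA : A = c := by linarith
  have eA₁ : A₁ = c := by linarith
  have eB₁ : B₁ * h = 2 * (c - b) := by linarith
  have eB₀ : B₀ * h = 2 * (b - a) := by linarith
  have eA₀ : A₀ = 2 * b - a := by linarith
  have eC : q.coeff 2 * h ^ 2 = 3 * (a + c - 2 * b) := by linarith
  have eB : B * h = 2 * a + 4 * c - 6 * b := by linarith
  subst eA eA₁ eA₀
  linear_combination (-ν / 2) * eB + (ν ^ 2 / 3) * eC + (ν ^ 2 / 2) * eB₀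
    + ((1 - ν) * ν / 2) * eB₁
end

section
/- Fix a grid step h > 0, a reference point x ∈ ℝ, real numbers A, a, B, c, C, and a real ν ≠ 0. Let p₀ be the unique polynomial of degree ≤ 2 with cell averages A over [x − 2h, x − h] and B over [x − h, x] and p₀(x − h) = a; let p₁ be the unique polynomial of degree ≤ 2 with p₁(x − h) = a, cell average B over [x − h, x], and p₁(x) = c; let p₂ be the unique polynomial of degree ≤ 2 with cell average B over [x − h, x], p₂(x) = c, and cell average C over [x, x + h]; and let q be the unique polynomial of degree ≤ 4 with cell averages A, B, C over [x − 2h, x − h], [x − h, x], [x, x + h] and q(x − h) = a, q(x) = c. Then, with γ̄₀ = ν(1 + ν)/6, γ̄₁ = (1 + ν)(2 − ν)/3, γ̄₂ = (1 − ν)(2 − ν)/6, one has γ̄₀ + γ̄₁ + γ̄₂ = 1 and (1/(νh))·∫_{x−νh}^{x} q = γ̄₀·(1/(νh))·∫_{x−νh}^{x} p₀ + γ̄₁·(1/(νh))·∫_{x−νh}^{x} p₁ + γ̄₂·(1/(νh))·∫_{x−νh}^{x} p₂. -/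
open intervalIntegral

lemma aux (h : ℝ) (hh : 0 < h) (x : ℝ) (p : Polynomial ℝ) (hp : p.natDegree ≤ 4) :
    ∃ e : ℕ → ℝ, (p.natDegree ≤ 2 → e 3 = 0 ∧ e 4 = 0) ∧
      (∀ t, p.eval (x + h * t) = e 0 + e 1 * t + e 2 * t^2 + e 3 * t^3 + e 4 * t^4) ∧
      (∀ α u v, u = x + h * α → ∀ β, v = x + h * β → ∫ s in u..v, p.eval s =
        h * ((e 0 * β + e 1 * β^2/2 + e 2 * β^3/3 + e 3 * β^4/4 + e 4 * β^5/5)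
          - (e 0 * α + e 1 * α^2/2 + e 2 * α^3/3 + e 3 * α^4/4 + e 4 * α^5/5))) := by
  have key : ∀ t, p.eval (x + h * t) =
      ∑ i ∈ Finset.range 5, (Polynomial.taylor x p).coeff i * h^i * t^i := by
    intro t
    have h1 : p.eval (x + h * t) = (Polynomial.taylor x p).eval (h * t) := by
      rw [Polynomial.taylor_eval, add_comm]
    rw [h1, Polynomial.eval_eq_sum_range' (n := 5)
      (by rw [Polynomial.natDegree_taylor]; omega)]
    exact Finset.sum_congr rfl fun i _ => by rw [mul_pow, mul_assoc]
  refine ⟨fun i => (Polynomial.taylor x p).coeff i * h^i, ?_, ?_, ?_⟩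
  · intro h2
    constructor
    · show (Polynomial.taylor x p).coeff 3 * h^3 = 0
      rw [Polynomial.coeff_eq_zero_of_natDegree_lt
        (by rw [Polynomial.natDegree_taylor]; omega), zero_mul]
    · show (Polynomial.taylor x p).coeff 4 * h^4 = 0
      rw [Polynomial.coeff_eq_zero_of_natDegree_lt
        (by rw [Polynomial.natDegree_taylor]; omega), zero_mul]
  · intro t
    rw [key]
    simp only [Finset.sum_range_succ, Finset.sum_range_zero]
    ring
  · rintro α u v rfl β rfl
    generalize (Polynomial.taylor x p).coeff = d at key
    rw [← intervalIntegral.mul_integral_comp_add_mul (f := fun s => p.eval s)]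
    congr 1
    apply intervalIntegral.integral_eq_sub_of_hasDerivAt (f := fun t =>
      d 0 * h^0 * t + d 1 * h^1 * t^2/2 + d 2 * h^2 * t^3/3 + d 3 * h^3 * t^4/4
        + d 4 * h^4 * t^5/5)
    · intro t _
      rw [key]
      have m : ∀ (k : ℝ) (n : ℕ), HasDerivAt (fun t : ℝ => k * t^n/n) (k * (n * t^(n-1))/n) t :=
        fun k n => ((hasDerivAt_pow n t).const_mul k).div_const _
      have := (((((hasDerivAt_id t).const_mul (d 0 * h^0)).add (m (d 1 * h^1) 2)).add
        (m (d 2 * h^2) 3)).add (m (d 3 * h^3) 4)).add (m (d 4 * h^4) 5)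
      refine this.congr_deriv ?_
      simp only [Finset.sum_range_succ, Finset.sum_range_zero]
      push_cast
      ring
    · exact (by fun_prop : Continuous fun t => p.eval (x + h * t)).intervalIntegrable _ _

set_option maxHeartbeats 1600000 in
/-- Optimal linear weight identity of Table 1 for r = 3: the fifth-order
big-stencil average reconstruction is a linear combination of the three
third-order sub-stencil average reconstructions with ν-dependent weights. -/
theorem stmt_9 (h : ℝ) (hh : 0 < h) (x A a B c C ν : ℝ) (hν : ν ≠ 0)
    (p₀ : Polynomial ℝ) (hdeg₀ : p₀.natDegree ≤ 2)
    (hp₀A : (1 / h) * ∫ s in (x - 2*h)..(x - h), p₀.eval s = A)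
    (hp₀B : (1 / h) * ∫ s in (x - h)..x, p₀.eval s = B)
    (hp₀a : p₀.eval (x - h) = a)
    (p₁ : Polynomial ℝ) (hdeg₁ : p₁.natDegree ≤ 2)
    (hp₁a : p₁.eval (x - h) = a)
    (hp₁B : (1 / h) * ∫ s in (x - h)..x, p₁.eval s = B)
    (hp₁c : p₁.eval x = c)
    (p₂ : Polynomial ℝ) (hdeg₂ : p₂.natDegree ≤ 2)
    (hp₂B : (1 / h) * ∫ s in (x - h)..x, p₂.eval s = B)
    (hp₂c : p₂.eval x = c)
    (hp₂C : (1 / h) * ∫ s in x..(x + h), p₂.eval s = C)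
    (q : Polynomial ℝ) (hdegq : q.natDegree ≤ 4)
    (hqA : (1 / h) * ∫ s in (x - 2*h)..(x - h), q.eval s = A)
    (hqB : (1 / h) * ∫ s in (x - h)..x, q.eval s = B)
    (hqC : (1 / h) * ∫ s in x..(x + h), q.eval s = C)
    (hqa : q.eval (x - h) = a)
    (hqc : q.eval x = c) :
    ν * (1 + ν) / 6 + (1 + ν) * (2 - ν) / 3 + (1 - ν) * (2 - ν) / 6 = 1 ∧
    (1 / (ν * h)) * ∫ s in (x - ν * h)..x, q.eval s
      = (ν * (1 + ν) / 6) * ((1 / (ν * h)) * ∫ s in (x - ν * h)..x, p₀.eval s)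
        + ((1 + ν) * (2 - ν) / 3) * ((1 / (ν * h)) * ∫ s in (x - ν * h)..x, p₁.eval s)
        + ((1 - ν) * (2 - ν) / 6) * ((1 / (ν * h)) * ∫ s in (x - ν * h)..x, p₂.eval s) := by
  refine ⟨by ring, ?_⟩
  have hne := hh.ne'
  obtain ⟨e, he, ev, ei⟩ := aux h hh x p₀ (by omega)
  obtain ⟨f, hf, fv, fi⟩ := aux h hh x p₁ (by omega)
  obtain ⟨g, hg, gv, gi⟩ := aux h hh x p₂ (by omega)
  obtain ⟨k, -, kv, ki⟩ := aux h hh x q hdegq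
  obtain ⟨e3, e4⟩ := he hdeg₀
  obtain ⟨f3, f4⟩ := hf hdeg₁
  obtain ⟨g3, g4⟩ := hg hdeg₂
  have y0 : x = x + h * 0 := by ring
  have y1 : x - h = x + h * (-1) := by ring
  have y2 : x - 2 * h = x + h * (-2) := by ring
  have y3 : x + h = x + h * 1 := by ring
  have yn : x - ν * h = x + h * (-ν) := by ring
  have z : ∀ w : ℝ, 1 / h * (h * w) = w := fun w => by field_simp
  have zn : ∀ w : ℝ, 1 / (ν * h) * (h * w) = w / ν := fun w => by field_simp
  rw [ei _ _ _ y2 _ y1, z] at hp₀A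
  rw [ei _ _ _ y1 _ y0, z] at hp₀B
  rw [y1, ev] at hp₀a
  rw [y1, fv] at hp₁a
  rw [fi _ _ _ y1 _ y0, z] at hp₁B
  rw [y0, fv] at hp₁c
  rw [gi _ _ _ y1 _ y0, z] at hp₂B
  rw [y0, gv] at hp₂c
  rw [gi _ _ _ y0 _ y3, z] at hp₂C
  rw [ki _ _ _ y2 _ y1, z] at hqA
  rw [ki _ _ _ y1 _ y0, z] at hqB
  rw [ki _ _ _ y0 _ y3, z] at hqC
  rw [y1, kv] at hqa
  rw [y0, kv] at hqc
  rw [ki _ _ _ yn _ y0, ei _ _ _ yn _ y0, fi _ _ _ yn _ y0, gi _ _ _ yn _ y0, zn, zn, zn, zn]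
  simp only [e3, e4] at hp₀A hp₀B hp₀a
  simp only [f3, f4] at hp₁a hp₁B hp₁c
  simp only [g3, g4] at hp₂B hp₂c hp₂C
  have e0 : e 0 = (1/2) * A + (-2) * a + (5/2) * B := by
    linarith only [hp₀A, hp₀B, hp₀a]
  have e1 : e 1 = (2) * A + (-6) * a + (4) * B := by
    linarith only [hp₀A, hp₀B, hp₀a]
  have e2 : e 2 = (3/2) * A + (-3) * a + (3/2) * B := by
    linarith only [hp₀A, hp₀B, hp₀a]
  have f0 : f 0 = (1) * c := by
    linarith only [hp₁a, hp₁B, hp₁c]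
  have f1 : f 1 = (2) * a + (-6) * B + (4) * c := by
    linarith only [hp₁a, hp₁B, hp₁c]
  have f2 : f 2 = (3) * a + (-6) * B + (3) * c := by
    linarith only [hp₁a, hp₁B, hp₁c]
  have g0 : g 0 = (1) * c := by
    linarith only [hp₂B, hp₂c, hp₂C]
  have g1 : g 1 = (-1) * B + (1) * C := by
    linarith only [hp₂B, hp₂c, hp₂C]
  have g2 : g 2 = (3/2) * B + (-3) * c + (3/2) * C := by
    linarith only [hp₂B, hp₂c, hp₂C]
  have k0 : k 0 = (1) * c := by
    linarith only [hqA, hqB, hqC, hqa, hqc]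
  have k1 : k 1 = (-1/6) * A + (2) * a + (-31/6) * B + (3) * c + (1/3) * C := by
    linarith only [hqA, hqB, hqC, hqa, hqc]
  have k2 : k 2 = (-1/4) * A + (3/2) * a + (-1) * B + (-3/2) * c + (5/4) * C := by
    linarith only [hqA, hqB, hqC, hqa, hqc]
  have k3 : k 3 = (1/3) * A + (-4) * a + (25/3) * B + (-6) * c + (4/3) * C := by
    linarith only [hqA, hqB, hqC, hqa, hqc]
  have k4 : k 4 = (5/12) * A + (-5/2) * a + (25/6) * B + (-5/2) * c + (5/12) * C := by
    linarith only [hqA, hqB, hqC, hqa, hqc]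
  rw [e0, e1, e2, e3, e4, f0, f1, f2, f3, f4, g0, g1, g2, g3, g4, k0, k1, k2, k3, k4]
  field_simp
  ring
end

section
/- Fix a grid step h > 0, a reference point x ∈ ℝ, real numbers a, b, c, and a real ν with ν ≠ 1/2. Let p₀ be the unique polynomial of degree ≤ 1 with p₀(x − h) = a and cell average b over [x − h, x]; let p₁ be the unique polynomial of degree ≤ 1 with cell average b over [x − h, x] and p₁(x) = c; and let q be the unique polynomial of degree ≤ 2 with q(x − h) = a, cell average b over [x − h, x], and q(x) = c. Then q(x − νh) = ((3ν² − 2ν)/(2ν − 1))·p₀(x − νh) + ((−3ν² + 4ν − 1)/(2ν − 1))·p₁(x − νh). -/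
open intervalIntegral

theorem quad_aux_s10 (h x : ℝ) (hh : 0 < h) (q : Polynomial ℝ) (hq : q.natDegree ≤ 2) :
    ∃ A B C : ℝ, (∀ t : ℝ, q.eval (x - t * h) = A + B * t + C * t ^ 2) ∧
      (1 / h) * (∫ s in (x - h)..x, q.eval s) = A + B / 2 + C / 3 ∧
      (q.natDegree ≤ 1 → C = 0) := by
  have hev : ∀ s : ℝ, q.eval s = q.coeff 0 + q.coeff 1 * s + q.coeff 2 * s ^ 2 := by
    intro s
    rw [Polynomial.eval_eq_sum_range' (Nat.lt_succ_of_le hq)]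
    simp [Finset.sum_range_succ]
  refine ⟨q.coeff 0 + q.coeff 1 * x + q.coeff 2 * x ^ 2,
    -(q.coeff 1 * h) - 2 * q.coeff 2 * x * h, q.coeff 2 * h ^ 2, ?_, ?_, ?_⟩
  · intro t
    rw [hev]
    ring
  · have hi : (∫ s in (x - h)..x, q.eval s) =
        (q.coeff 0 * x + q.coeff 1 * x ^ 2 / 2 + q.coeff 2 * x ^ 3 / 3) -
        (q.coeff 0 * (x - h) + q.coeff 1 * (x - h) ^ 2 / 2 + q.coeff 2 * (x - h) ^ 3 / 3) := by
      apply integral_eq_sub_of_hasDerivAt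
        (f := fun s => q.coeff 0 * s + q.coeff 1 * s ^ 2 / 2 + q.coeff 2 * s ^ 3 / 3)
      · intro s _
        rw [hev]
        have h1 := (hasDerivAt_id' s).const_mul (q.coeff 0)
        have h2 := ((hasDerivAt_pow 2 s).const_mul (q.coeff 1)).div_const 2
        have h3 := ((hasDerivAt_pow 3 s).const_mul (q.coeff 2)).div_const 3
        convert (h1.add h2).add h3 using 1
        · rfl
        · norm_num
          ring
      · exact q.continuous.intervalIntegrable _ _
    rw [hi]
    field_simp
    ring
  · intro h1
    rw [Polynomial.coeff_eq_zero_of_natDegree_lt (by omega)]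
    ring

/-- Optimal linear weight identity of Table 2 for r = 2: the big-stencil
point-value reconstruction q(x − νh) is recovered from the two sub-stencil
point values with the stated weights, for ν ≠ 1/2. -/
theorem stmt_10 (h : ℝ) (hh : 0 < h) (x a b c ν : ℝ) (hν : ν ≠ 1/2)
    (p₀ : Polynomial ℝ) (hdeg₀ : p₀.natDegree ≤ 1)
    (hp₀a : p₀.eval (x - h) = a)
    (hp₀b : (1 / h) * ∫ s in (x - h)..x, p₀.eval s = b)
    (p₁ : Polynomial ℝ) (hdeg₁ : p₁.natDegree ≤ 1)
    (hp₁b : (1 / h) * ∫ s in (x - h)..x, p₁.eval s = b)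
    (hp₁c : p₁.eval x = c)
    (q : Polynomial ℝ) (hdegq : q.natDegree ≤ 2)
    (hqa : q.eval (x - h) = a)
    (hqb : (1 / h) * ∫ s in (x - h)..x, q.eval s = b)
    (hqc : q.eval x = c) :
    q.eval (x - ν * h)
      = ((3*ν^2 - 2*ν) / (2*ν - 1)) * p₀.eval (x - ν * h)
        + ((-3*ν^2 + 4*ν - 1) / (2*ν - 1)) * p₁.eval (x - ν * h) := by
  have hne : 2 * ν - 1 ≠ 0 := fun h0 => hν (by linarith)
  obtain ⟨A, B, C, e, i, z⟩ := quad_aux_s10 h x hh q hdegq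
  obtain ⟨A₀, B₀, C₀, e₀, i₀, z₀⟩ := quad_aux_s10 h x hh p₀ (by omega)
  obtain ⟨A₁, B₁, C₁, e₁, i₁, z₁⟩ := quad_aux_s10 h x hh p₁ (by omega)
  have z₀ := z₀ hdeg₀
  have z₁ := z₁ hdeg₁
  have ea := e 1
  have ec := e 0
  have ea₀ := e₀ 1
  have ec₁ := e₁ 0
  rw [one_mul, hqa] at ea
  rw [zero_mul, sub_zero, hqc] at ec
  rw [one_mul, hp₀a] at ea₀
  rw [zero_mul, sub_zero, hp₁c] at ec₁
  rw [hqb] at i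
  rw [hp₀b] at i₀
  rw [hp₁b] at i₁
  rw [e, e₀, e₁]
  subst z₀ z₁
  have hA : A = c := by linarith
  have hB : B = 6 * b - 2 * a - 4 * c := by linarith
  have hC : C = 3 * a + 3 * c - 6 * b := by linarith
  have hB₀ : B₀ = 2 * (a - b) := by linarith
  have hA₀ : A₀ = 2 * b - a := by linarith
  have hA₁ : A₁ = c := by linarith
  have hB₁ : B₁ = 2 * (b - c) := by linarith
  rw [hA, hB, hC, hA₀, hB₀, hA₁, hB₁]
  field_simp
  ring
end

section
/- Let u be a polynomial with real coefficients of degree at most 3 and let c₃ be its coefficient of X³. Fix h > 0 and x ∈ ℝ, and let q be the unique polynomial of degree at most 2 with q(x − h) = u(x − h), cell average over [x − h, x] equal to that of u, and q(x) = u(x). Then for every real ν ≠ 0, (1/(νh))·∫_{x−νh}^{x} (u(s) − q(s)) ds = −(c₃/4)·ν·(1 − ν)²·h³. -/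
open intervalIntegral

lemma cubic_integral (A B C D x a b : ℝ) :
    ∫ s in a..b, (A + B * (s - x) + C * (s - x)^2 + D * (s - x)^3)
      = (A * (b - x) + B * (b - x)^2 / 2 + C * (b - x)^3 / 3 + D * (b - x)^4 / 4)
        - (A * (a - x) + B * (a - x)^2 / 2 + C * (a - x)^3 / 3 + D * (a - x)^4 / 4) := by
  refine integral_eq_sub_of_hasDerivAt
    (f := fun s => A * (s - x) + B * (s - x)^2 / 2 + C * (s - x)^3 / 3 + D * (s - x)^4 / 4)
    (fun s _ => ?_) (Continuous.intervalIntegrable (by fun_prop) _ _)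
  have h1 : HasDerivAt (fun s : ℝ => s - x) 1 s := (hasDerivAt_id s).sub_const x
  convert (((h1.const_mul A).add (((h1.pow 2).const_mul B).div_const 2)).add
    (((h1.pow 3).const_mul C).div_const 3)).add (((h1.pow 4).const_mul D).div_const 4) using 1
  · ext t
    simp
  · norm_num
    ring

/-- Exact leading-error formula for the CFWENO3 big-stencil average
reconstruction on a cubic: the error is −(c₃/4)·ν(1 − ν)²·h³. -/
theorem stmt_14 (u : Polynomial ℝ) (hu : u.natDegree ≤ 3)
    (c₃ : ℝ) (hc₃ : c₃ = u.coeff 3)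
    (h : ℝ) (hh : 0 < h) (x : ℝ)
    (q : Polynomial ℝ) (hdeg : q.natDegree ≤ 2)
    (hqa : q.eval (x - h) = u.eval (x - h))
    (hqb : (1 / h) * ∫ s in (x - h)..x, q.eval s
            = (1 / h) * ∫ s in (x - h)..x, u.eval s)
    (hqc : q.eval x = u.eval x) :
    ∀ ν : ℝ, ν ≠ 0 →
      (1 / (ν * h)) * ∫ s in (x - ν * h)..x, (u.eval s - q.eval s)
        = -(c₃ / 4) * ν * (1 - ν)^2 * h^3 := by
  intro ν hν
  obtain ⟨A, B, C, he⟩ : ∃ A B C : ℝ, ∀ s, u.eval s - q.eval s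
      = A + B * (s - x) + C * (s - x)^2 + c₃ * (s - x)^3 := by
    refine ⟨(u.coeff 0 - q.coeff 0) + (u.coeff 1 - q.coeff 1) * x
      + (u.coeff 2 - q.coeff 2) * x^2 + c₃ * x^3,
      (u.coeff 1 - q.coeff 1) + 2 * (u.coeff 2 - q.coeff 2) * x + 3 * c₃ * x^2,
      (u.coeff 2 - q.coeff 2) + 3 * c₃ * x, fun s => ?_⟩
    rw [Polynomial.eval_eq_sum_range' (show u.natDegree < 4 by omega),
      Polynomial.eval_eq_sum_range' (show q.natDegree < 3 by omega), hc₃]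
    simp only [Finset.sum_range_succ, Finset.sum_range_zero]
    ring
  have hA : A = 0 := by
    have := he x
    rw [hqc] at this
    simpa using this.symm
  have h1 := he (x - h)
  rw [hqa] at h1
  have h2 : ∫ s in (x - h)..x, (u.eval s - q.eval s) = 0 := by
    rw [integral_sub (u.continuous.intervalIntegrable _ _) (q.continuous.intervalIntegrable _ _)]
    have := mul_left_cancel₀ (one_div_ne_zero hh.ne') hqb
    rw [this, sub_self]
  simp only [he, cubic_integral] at h2 ⊢
  subst hA
  have hB : B = C * h - c₃ * h^2 := by
    apply mul_left_cancel₀ hh.ne'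
    linarith
  subst hB
  have hC : C = 3 / 2 * c₃ * h := by
    apply mul_left_cancel₀ (pow_ne_zero 3 hh.ne')
    linarith
  subst hC
  have := hh.ne'
  field_simp
  ring
end

section
/- Let u be a polynomial with real coefficients of degree at most 3 and let c₃ be its coefficient of X³. Fix h > 0 and x ∈ ℝ, and let q be the unique polynomial of degree at most 2 with q(x − h) = u(x − h), cell average over [x − h, x] equal to that of u, and q(x) = u(x). Then for every real ν, u(x − νh) − q(x − νh) = (c₃/2)·ν·(1 − ν)·(2ν − 1)·h³. -/
open intervalIntegral

/-- Exact leading-error formula for the CFWENO3 big-stencil point-value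
reconstruction on a cubic: the error is (c₃/2)·ν(1 − ν)(2ν − 1)·h³. -/
theorem stmt_15 (u : Polynomial ℝ) (hu : u.natDegree ≤ 3)
    (c₃ : ℝ) (hc₃ : c₃ = u.coeff 3)
    (h : ℝ) (hh : 0 < h) (x : ℝ)
    (q : Polynomial ℝ) (hdeg : q.natDegree ≤ 2)
    (hqa : q.eval (x - h) = u.eval (x - h))
    (hqb : (1 / h) * ∫ s in (x - h)..x, q.eval s
            = (1 / h) * ∫ s in (x - h)..x, u.eval s)
    (hqc : q.eval x = u.eval x) :
    ∀ ν : ℝ,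
      u.eval (x - ν * h) - q.eval (x - ν * h)
        = (c₃ / 2) * ν * (1 - ν) * (2*ν - 1) * h^3 := by
  have hev : ∀ s : ℝ, u.eval s = u.coeff 0 + u.coeff 1 * s + u.coeff 2 * s ^ 2
      + u.coeff 3 * s ^ 3 := by
    intro s
    rw [Polynomial.eval_eq_sum_range' (n := 4) (by omega)]
    simp [Finset.sum_range_succ]
  have heq : ∀ s : ℝ, q.eval s = q.coeff 0 + q.coeff 1 * s + q.coeff 2 * s ^ 2
      + 0 * s ^ 3 := by
    intro s
    rw [Polynomial.eval_eq_sum_range' (n := 3) (by omega)]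
    simp [Finset.sum_range_succ]
  have hint : ∀ a b c d : ℝ, ∫ s in (x - h)..x, (a + b * s + c * s ^ 2 + d * s ^ 3)
      = (a * x + b * x ^ 2 / 2 + c * x ^ 3 / 3 + d * x ^ 4 / 4)
        - (a * (x - h) + b * (x - h) ^ 2 / 2 + c * (x - h) ^ 3 / 3 + d * (x - h) ^ 4 / 4) := by
    intro a b c d
    rw [intervalIntegral.integral_eq_sub_of_hasDerivAt
      (f := fun s : ℝ => a * s + b * s ^ 2 / 2 + c * s ^ 3 / 3 + d * s ^ 4 / 4)]
    · intro s _
      have h1 := (hasDerivAt_id s).const_mul a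
      have h2 := ((hasDerivAt_pow 2 s).const_mul b).div_const 2
      have h3 := ((hasDerivAt_pow 3 s).const_mul c).div_const 3
      have h4 := ((hasDerivAt_pow 4 s).const_mul d).div_const 4
      refine (((h1.add h2).add h3).add h4).congr_deriv ?_
      norm_num
      ring
    · exact Continuous.intervalIntegrable (by fun_prop) _ _
  intro ν
  have hI := mul_left_cancel₀ (one_div_ne_zero hh.ne') hqb
  simp only [hev, heq, hint] at hI hqa hqc ⊢
  subst hc₃
  generalize u.coeff 0 = u0 at *
  generalize u.coeff 1 = u1 at *
  generalize u.coeff 2 = u2 at *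
  generalize u.coeff 3 = u3 at *
  generalize q.coeff 0 = q0 at *
  generalize q.coeff 1 = q1 at *
  generalize q.coeff 2 = q2 at *
  have hm : q0 + q1 * (x - h / 2) + q2 * (x - h / 2) ^ 2
      = u0 + u1 * (x - h / 2) + u2 * (x - h / 2) ^ 2 + u3 * (x - h / 2) ^ 3 := by
    apply mul_left_cancel₀ hh.ne'
    linear_combination (3 / 2) * hI - h / 4 * hqa - h / 4 * hqc
  linear_combination (-(1 - ν) * (1 - 2 * ν)) * hqc - 4 * ν * (1 - ν) * hm
    - ν * (2 * ν - 1) * hqa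
end

section
/- Fix h > 0, x₀ ∈ ℝ, and real numbers a, b, c. Let p be the unique polynomial of degree at most 2 with p(x₀) = a, cell average b over [x₀, x₀ + h], and p(x₀ + h) = c. Then ∫_{x₀}^{x₀+h} ( h·p′(s)² + h³·p″(s)² ) ds = (c − a)² + 39·(a − 2b + c)². -/
open intervalIntegral Polynomial

/-- Explicit evaluation of the Jiang–Shu-type smoothness indicator β₁³ of
formula (26) for the middle CFWENO5 sub-stencil. -/
theorem stmt_16 (h : ℝ) (hh : 0 < h) (x₀ a b c : ℝ)
    (p : Polynomial ℝ) (hdeg : p.natDegree ≤ 2)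
    (hpa : p.eval x₀ = a)
    (hpb : (1 / h) * ∫ s in x₀..(x₀ + h), p.eval s = b)
    (hpc : p.eval (x₀ + h) = c) :
    (∫ s in x₀..(x₀ + h),
        (h * ((Polynomial.derivative p).eval s)^2
          + h^3 * ((Polynomial.derivative (Polynomial.derivative p)).eval s)^2))
      = (c - a)^2 + 39 * (a - 2*b + c)^2 := by
  obtain ⟨k0, k1, k2, rfl⟩ : ∃ k0 k1 k2 : ℝ, p = C k0 + C k1 * X + C k2 * X ^ 2 := by
    refine ⟨p.coeff 0, p.coeff 1, p.coeff 2, ?_⟩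
    conv_lhs => rw [p.as_sum_range_C_mul_X_pow' (n := 3) (by omega)]
    simp [Finset.sum_range_succ]
  have e1 : (∫ s in x₀..(x₀ + h), (C k0 + C k1 * X + C k2 * X ^ 2 : ℝ[X]).eval s)
      = (k0 * (x₀ + h) + k1 * (x₀ + h) ^ 2 / 2 + k2 * (x₀ + h) ^ 3 / 3)
        - (k0 * x₀ + k1 * x₀ ^ 2 / 2 + k2 * x₀ ^ 3 / 3) := by
    refine integral_eq_sub_of_hasDerivAt
      (f := fun s => k0 * s + k1 * s ^ 2 / 2 + k2 * s ^ 3 / 3) (fun s _ => ?_)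
      (Continuous.intervalIntegrable (by fun_prop) _ _)
    convert (((hasDerivAt_id s).const_mul k0).add
      (((hasDerivAt_pow 2 s).const_mul k1).div_const 2)).add
      (((hasDerivAt_pow 3 s).const_mul k2).div_const 3) using 1
    · rfl
    · simp
      ring
  rw [e1] at hpb
  have e2 : (∫ s in x₀..(x₀ + h),
        (h * ((derivative (C k0 + C k1 * X + C k2 * X ^ 2 : ℝ[X])).eval s)^2
          + h^3 * ((derivative (derivative (C k0 + C k1 * X + C k2 * X ^ 2 : ℝ[X]))).eval s)^2))
      = ((h * k1 ^ 2 + h ^ 3 * 4 * k2 ^ 2) * (x₀ + h) + (4 * h * k1 * k2) * (x₀ + h) ^ 2 / 2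
          + (4 * h * k2 ^ 2) * (x₀ + h) ^ 3 / 3)
        - ((h * k1 ^ 2 + h ^ 3 * 4 * k2 ^ 2) * x₀ + (4 * h * k1 * k2) * x₀ ^ 2 / 2
          + (4 * h * k2 ^ 2) * x₀ ^ 3 / 3) := by
    refine integral_eq_sub_of_hasDerivAt
      (f := fun s => (h * k1 ^ 2 + h ^ 3 * 4 * k2 ^ 2) * s + (4 * h * k1 * k2) * s ^ 2 / 2
          + (4 * h * k2 ^ 2) * s ^ 3 / 3) (fun s _ => ?_)
      (Continuous.intervalIntegrable (by fun_prop) _ _)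
    convert (((hasDerivAt_id s).const_mul (h * k1 ^ 2 + h ^ 3 * 4 * k2 ^ 2)).add
      (((hasDerivAt_pow 2 s).const_mul (4 * h * k1 * k2)).div_const 2)).add
      (((hasDerivAt_pow 3 s).const_mul (4 * h * k2 ^ 2)).div_const 3) using 1
    · rfl
    · simp
      ring
  rw [e2]
  have hb : b = k0 + k1 * (x₀ + h / 2) + k2 * (x₀ ^ 2 + x₀ * h + h ^ 2 / 3) := by
    rw [← hpb]
    field_simp
    ring
  simp only [eval_add, eval_mul, eval_C, eval_X, eval_pow] at hpa hpc
  subst hb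
  rw [← hpa, ← hpc]
  ring
end

section
/- For every real ν with 0 < ν < 1, the following three strict inequalities hold: (1/4)·ν(1 − ν)² < (1/24)·(1 − ν²)(2 − ν); (1/36)·ν(1 − ν)²(1 + ν)(2 − ν) < (1/720)·(1 − ν²)(4 − ν²)(3 − ν); and (1/576)·ν(1 − ν)²(1 + ν)²(2 − ν)² < (1/40320)·(1 − ν²)(4 − ν²)(9 − ν²)(4 − ν). -/
/-- For ν ∈ (0, 1), the CFWENO error coefficients of Table 4 are strictly
smaller than the corresponding FWENO error coefficients. -/
theorem stmt_19 :
    ∀ ν : ℝ, 0 < ν → ν < 1 →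
      (1/4) * (ν * (1 - ν)^2) < (1/24) * ((1 - ν^2) * (2 - ν)) ∧
      (1/36) * (ν * (1 - ν)^2 * (1 + ν) * (2 - ν))
        < (1/720) * ((1 - ν^2) * (4 - ν^2) * (3 - ν)) ∧
      (1/576) * (ν * (1 - ν)^2 * (1 + ν)^2 * (2 - ν)^2)
        < (1/40320) * ((1 - ν^2) * (4 - ν^2) * (9 - ν^2) * (4 - ν)) := by
  intro ν h0 h1
  have ha : 0 < 1 - ν := by linarith
  have hb : 0 < (1 - ν) * (1 + ν) * (2 - ν) :=
    mul_pos (mul_pos ha (by linarith)) (by linarith)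
  have hw0 : 0 < ν * (1 - ν) := mul_pos h0 ha
  have hw : ν * (1 - ν) ≤ 1 / 4 := by nlinarith [sq_nonneg (2 * ν - 1)]
  have hw2 : (ν * (1 - ν)) ^ 2 ≤ 1 / 4 := by nlinarith
  have e1 := mul_pos ha (show 0 < 2 - 5 * (ν * (1 - ν)) by linarith)
  have e2 := mul_pos hb (show 0 < 6 - 19 * (ν * (1 - ν)) by linarith)
  have e3 := mul_pos hb
    (show 0 < 72 - 122 * (ν * (1 - ν)) - 69 * (ν * (1 - ν)) ^ 2 by linarith)
  refine ⟨?_, ?_, ?_⟩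
  · linarith
  · linarith
  · linarith
end
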